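/- For every x ∈ ℝⁿ, V(x) < ∞ if and only if x ∈ D(x_eq), the region of attraction of x_eq. -/

import Mathlib

open Filter Topology MeasureTheory
open scoped ENNReal

noncomputable section

/-- `V(x) = ∫₀^∞ η(φ(t,x)) dt`, with value `∞` if the integral diverges. -/
def zubovV {n : ℕ} (φ : ℝ → EuclideanSpace ℝ (Fin n) → EuclideanSpace ℝ (Fin n))
    (η : EuclideanSpace ℝ (Fin n) → ℝ) (x : EuclideanSpace ℝ (Fin n)) : ℝ≥0∞ :=
  ∫⁻ t in Set.Ioi (0:ℝ), ENNReal.ofReal (η (φ t x))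

/-!
Finiteness of `V x` and membership of `x` in the region of attraction are both properties of the
tail of the orbit: neither changes when `x` is replaced by `φ T x`. Near the equilibrium both hold
outright, by exponential stability and `η = O(dist)`. Each of them, moreover, forces the orbit to
enter every neighbourhood of the equilibrium, since `η` is bounded below off such a neighbourhood
and `∫₀^∞ m dt = ∞` for `m > 0`. So each implies the other: follow the orbit into a small
neighbourhood of the equilibrium, and pull the property back along it.
-/

section Semiflow

open scoped NNReal

variable {X : Type*} {φ : ℝ → X → X} {η : X → ℝ≥0} {T : ℝ}

/-- The semigroup law of the flow of an autonomous system in forward time. The values `φ t x` at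
`t < 0` are unconstrained, so that flow maps only known on `[0, ∞)` fit the type `ℝ → X → X`. -/
def SatisfiesSemigroupLaw (φ : ℝ → X → X) : Prop :=
  ∀ x, ∀ s ≥ (0 : ℝ), ∀ t ≥ (0 : ℝ), φ s (φ t x) = φ (t + s) x

/-- The cost `∫₀^∞ η(φ(t,x)) dt` of the forward orbit of `x`: the function `V` over an arbitrary
state space. Taking `η` with values in `ℝ≥0` builds in its nonnegativity. -/
def orbitCost (φ : ℝ → X → X) (η : X → ℝ≥0) (x : X) : ℝ≥0∞ :=
  ∫⁻ t in Set.Ioi (0 : ℝ), η (φ t x)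

theorem orbitCost_eq_setLIntegral_Ioc_add (hφ : SatisfiesSemigroupLaw φ) (hT : 0 ≤ T) (x : X) :
    orbitCost φ η x = (∫⁻ t in Set.Ioc 0 T, (η (φ t x) : ℝ≥0∞)) + orbitCost φ η (φ T x) := by
  have htail : orbitCost φ η (φ T x) = ∫⁻ t in Set.Ioi T, (η (φ t x) : ℝ≥0∞) := calc
    orbitCost φ η (φ T x) = ∫⁻ s in Set.Ioi (0 : ℝ), (η (φ (T + s) x) : ℝ≥0∞) :=
      setLIntegral_congr_fun measurableSet_Ioi fun s hs => by simp only [hφ x s (le_of_lt hs) T hT]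
    _ = ∫⁻ t in (T + ·) '' Set.Ioi 0, (η (φ t x) : ℝ≥0∞) :=
      (measurePreserving_add_left volume T).setLIntegral_comp_emb
        (measurableEmbedding_addLeft T) (fun t => (η (φ t x) : ℝ≥0∞)) _
    _ = ∫⁻ t in Set.Ioi T, (η (φ t x) : ℝ≥0∞) := by rw [Set.image_const_add_Ioi, add_zero]
  rw [htail, ← lintegral_union measurableSet_Ioi (Set.Ioc_disjoint_Ioi le_rfl),
    Set.Ioc_union_Ioi_eq_Ioi hT, orbitCost]

theorem orbitCost_lt_top_of_apply (hφ : SatisfiesSemigroupLaw φ) (hT : 0 ≤ T) {x : X}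
    (hcont : ContinuousOn (fun t => η (φ t x)) (Set.Icc 0 T))
    (hV : orbitCost φ η (φ T x) < ⊤) : orbitCost φ η x < ⊤ := by
  have hbdd : BddAbove ((fun t => η (φ t x)) '' Set.Ioc 0 T) :=
    (isCompact_Icc.bddAbove_image hcont).mono (Set.image_mono Set.Ioc_subset_Icc_self)
  rw [orbitCost_eq_setLIntegral_Ioc_add hφ hT]
  exact ENNReal.add_lt_top.2 ⟨setLIntegral_lt_top_of_bddAbove measure_Ioc_lt_top.ne hbdd, hV⟩

theorem exists_mem_of_orbitCost_lt_top {x : X} {U : Set X} {m : ℝ≥0} (hm : 0 < m)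
    (hη : ∀ y ∉ U, m ≤ η y) (hV : orbitCost φ η x < ⊤) : ∃ t ≥ 0, φ t x ∈ U := by
  by_contra! hout
  refine hV.not_ge ?_
  calc (⊤ : ℝ≥0∞) = ∫⁻ _ in Set.Ioi (0 : ℝ), m := by
        rw [setLIntegral_const, Real.volume_Ioi, ENNReal.mul_top (by simpa using hm.ne')]
    _ ≤ orbitCost φ η x := setLIntegral_mono' measurableSet_Ioi fun t ht =>
        ENNReal.coe_le_coe.2 (hη _ (hout t (le_of_lt ht)))

section Topological

variable [TopologicalSpace X] {xeq : X}

/-- The region of attraction `D(xeq)`: the states whose forward orbit converges to `xeq`. -/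
def regionOfAttraction (φ : ℝ → X → X) (xeq : X) : Set X :=
  {x | Tendsto (fun t => φ t x) atTop (𝓝 xeq)}

theorem mem_regionOfAttraction {x : X} :
    x ∈ regionOfAttraction φ xeq ↔ Tendsto (fun t => φ t x) atTop (𝓝 xeq) :=
  Iff.rfl

theorem apply_mem_regionOfAttraction_iff (hφ : SatisfiesSemigroupLaw φ) (hT : 0 ≤ T) {x : X} :
    φ T x ∈ regionOfAttraction φ xeq ↔ x ∈ regionOfAttraction φ xeq := by
  have hshift : (fun t => φ t (φ T x)) =ᶠ[atTop] (fun t => φ t x) ∘ (· + T) := by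
    filter_upwards [eventually_ge_atTop 0] with t ht
    rw [hφ x t ht T hT, Function.comp_apply, add_comm]
  rw [mem_regionOfAttraction, mem_regionOfAttraction, tendsto_congr' hshift, ← tendsto_map'_iff,
    map_add_atTop_eq]

theorem exists_mem_of_mem_regionOfAttraction {x : X} {U : Set X}
    (hx : x ∈ regionOfAttraction φ xeq) (hU : U ∈ 𝓝 xeq) : ∃ t ≥ 0, φ t x ∈ U :=
  ((eventually_ge_atTop 0).and (hx hU)).exists

end Topological

section Metric

variable [PseudoMetricSpace X] {xeq : X}

theorem isBigO_sub_dist_of_locallyLipschitz {E : Type*} [SeminormedAddCommGroup E] {g : X → E}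
    (hg : LocallyLipschitz g) (a : X) : (fun y => g y - g a) =O[𝓝 a] fun y => dist y a := by
  obtain ⟨K, U, hU, hKU⟩ := hg a
  refine .of_bound K ?_
  filter_upwards [hU] with y hy
  simpa only [dist_eq_norm (g y), Real.norm_of_nonneg dist_nonneg]
    using hKU.dist_le_mul y hy a (mem_of_mem_nhds hU)

/-- Local exponential stability of `{xeq}`: orbits starting within some distance `δ` of `xeq`
approach it at a uniform exponential rate `c`, up to a uniform factor `M`. -/
def IsLocallyExponentiallyStable (φ : ℝ → X → X) (xeq : X) : Prop :=
  ∃ δ > (0 : ℝ), ∃ M > (0 : ℝ), ∃ c > (0 : ℝ), ∀ x, dist x xeq ≤ δ →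
    ∀ t ≥ (0 : ℝ), dist (φ t x) xeq ≤ M * dist x xeq * Real.exp (-c * t)

namespace IsLocallyExponentiallyStable

theorem eventually_forall_mem (h : IsLocallyExponentiallyStable φ xeq) {U : Set X}
    (hU : U ∈ 𝓝 xeq) : ∀ᶠ x in 𝓝 xeq, ∀ t ≥ (0 : ℝ), φ t x ∈ U := by
  obtain ⟨δ, hδ, M, hM, c, hc, hdecay⟩ := h
  obtain ⟨ε, hε, hεU⟩ := Metric.mem_nhds_iff.1 hU
  filter_upwards [Metric.closedBall_mem_nhds xeq hδ, Metric.ball_mem_nhds xeq (div_pos hε hM)]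
    with x hxδ hxε t ht
  refine hεU (Metric.mem_ball.2 ?_)
  have hexp : Real.exp (-c * t) ≤ 1 :=
    Real.exp_le_one_iff.2 (mul_nonpos_of_nonpos_of_nonneg (neg_nonpos.2 hc.le) ht)
  calc dist (φ t x) xeq ≤ M * dist x xeq * Real.exp (-c * t) := hdecay x hxδ t ht
    _ ≤ M * dist x xeq := mul_le_of_le_one_right (by positivity) hexp
    _ < ε := (lt_div_iff₀' hM).1 hxε

theorem regionOfAttraction_mem_nhds (h : IsLocallyExponentiallyStable φ xeq) :
    regionOfAttraction φ xeq ∈ 𝓝 xeq := by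
  obtain ⟨δ, hδ, M, -, c, hc, hdecay⟩ := h
  filter_upwards [Metric.closedBall_mem_nhds xeq hδ] with x hx
  have hexp : Tendsto (fun t : ℝ => Real.exp (-c * t)) atTop (𝓝 0) :=
    Real.tendsto_exp_atBot.comp (tendsto_id.const_mul_atTop_of_neg (neg_lt_zero.2 hc))
  refine tendsto_iff_dist_tendsto_zero.2 <| squeeze_zero' (.of_forall fun t => dist_nonneg)
    ((eventually_ge_atTop 0).mono (hdecay x hx)) ?_
  simpa only [mul_zero] using hexp.const_mul (M * dist x xeq)

theorem eventually_orbitCost_lt_top (h : IsLocallyExponentiallyStable φ xeq)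
    (hη : (fun y => (η y : ℝ)) =O[𝓝 xeq] fun y => dist y xeq) :
    ∀ᶠ x in 𝓝 xeq, orbitCost φ η x < ⊤ := by
  obtain ⟨K, hK, hηK⟩ := hη.exists_nonneg
  have hstay := h.eventually_forall_mem hηK.bound
  obtain ⟨δ, hδ, M, -, c, hc, hdecay⟩ := h
  filter_upwards [hstay, Metric.closedBall_mem_nhds xeq hδ] with x hxstay hxδ
  have hbound : ∀ t ≥ (0 : ℝ), (η (φ t x) : ℝ) ≤ K * (M * dist x xeq * Real.exp (-c * t)) :=
    fun t ht => calc
      (η (φ t x) : ℝ) ≤ K * dist (φ t x) xeq := by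
        simpa only [NNReal.norm_eq, Real.norm_of_nonneg dist_nonneg] using hxstay t ht
      _ ≤ K * (M * dist x xeq * Real.exp (-c * t)) := by gcongr; exact hdecay x hxδ t ht
  have hint : IntegrableOn (fun t => K * (M * dist x xeq * Real.exp (-c * t))) (Set.Ioi 0) :=
    ((exp_neg_integrableOn_Ioi 0 hc).const_mul _).const_mul K
  refine (setLIntegral_mono' measurableSet_Ioi fun t ht => ?_).trans_lt hint.lintegral_lt_top
  rw [← ENNReal.ofReal_coe_nnreal]
  exact ENNReal.ofReal_le_ofReal (hbound t (le_of_lt ht))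

end IsLocallyExponentiallyStable

theorem zubovV_finite_iff_mem_roa_general (hφ : SatisfiesSemigroupLaw φ)
    (hφcont : ∀ x, ContinuousOn (fun t => φ t x) (Set.Ici 0))
    (hstab : IsLocallyExponentiallyStable φ xeq) (hη : Continuous η)
    (hηO : (fun y => (η y : ℝ)) =O[𝓝 xeq] fun y => dist y xeq)
    (hηinf : ∀ r > (0 : ℝ), ∃ m > 0, ∀ y, r ≤ dist y xeq → m ≤ η y) (x : X) :
    orbitCost φ η x < ⊤ ↔ x ∈ regionOfAttraction φ xeq := by
  constructor
  · intro hV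
    obtain ⟨r, hr, hball⟩ := Metric.mem_nhds_iff.1 hstab.regionOfAttraction_mem_nhds
    obtain ⟨m, hm, hηm⟩ := hηinf r hr
    obtain ⟨T, hT, hTball⟩ : ∃ T ≥ 0, φ T x ∈ Metric.ball xeq r :=
      exists_mem_of_orbitCost_lt_top hm (fun y hy => hηm y (not_lt.1 hy)) hV
    exact (apply_mem_regionOfAttraction_iff hφ hT).1 (hball hTball)
  · intro hx
    obtain ⟨T, hT, hVT⟩ : ∃ T ≥ 0, orbitCost φ η (φ T x) < ⊤ :=
      exists_mem_of_mem_regionOfAttraction hx (hstab.eventually_orbitCost_lt_top hηO)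
    exact orbitCost_lt_top_of_apply hφ hT
      (hη.comp_continuousOn ((hφcont x).mono Set.Icc_subset_Ici_self)) hVT

end Metric

end Semiflow

theorem zubovV_eq_orbitCost {n : ℕ}
    (φ : ℝ → EuclideanSpace ℝ (Fin n) → EuclideanSpace ℝ (Fin n))
    (η : EuclideanSpace ℝ (Fin n) → ℝ) :
    zubovV φ η = orbitCost φ fun y => (η y).toNNReal :=
  rfl

/-- `V(x) < ∞` iff `x` belongs to the region of attraction of `x_eq`. -/
theorem zubovV_finite_iff_mem_roa {n : ℕ}
    (f : EuclideanSpace ℝ (Fin n) → EuclideanSpace ℝ (Fin n))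
    (φ : ℝ → EuclideanSpace ℝ (Fin n) → EuclideanSpace ℝ (Fin n))
    (xeq : EuclideanSpace ℝ (Fin n))
    (hf : LocallyLipschitz f)
    (hφ0 : ∀ x, φ 0 x = x)
    (hφd : ∀ x, ∀ t ≥ (0:ℝ), HasDerivWithinAt (fun s => φ s x) (f (φ t x)) (Set.Ici 0) t)
    (hφadd : ∀ x, ∀ s ≥ (0:ℝ), ∀ t ≥ (0:ℝ), φ s (φ t x) = φ (t + s) x)
    (hfeq : f xeq = 0)
    (hstab : ∃ δ > (0:ℝ), ∃ M > (0:ℝ), ∃ c > (0:ℝ), ∀ x : EuclideanSpace ℝ (Fin n),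
      ‖x - xeq‖ ≤ δ → ∀ t ≥ (0:ℝ), ‖φ t x - xeq‖ ≤ M * ‖x - xeq‖ * Real.exp (-c * t))
    (η : EuclideanSpace ℝ (Fin n) → ℝ)
    (hη : LocallyLipschitz η) (hηnn : ∀ x, 0 ≤ η x)
    (hη0 : η xeq = 0) (hηpos : ∀ x, x ≠ xeq → 0 < η x)
    (hηinf : ∀ r > (0:ℝ), ∃ m > (0:ℝ), ∀ y, r ≤ ‖y - xeq‖ → m ≤ η y) :
    ∀ x : EuclideanSpace ℝ (Fin n),
      zubovV φ η x < ⊤ ↔ Tendsto (fun t => φ t x) atTop (𝓝 xeq) := by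
  have hstab' : IsLocallyExponentiallyStable φ xeq := by
    simpa only [IsLocallyExponentiallyStable, dist_eq_norm] using hstab
  have hηO : (fun y => ((η y).toNNReal : ℝ)) =O[𝓝 xeq] fun y => dist y xeq := by
    simpa only [hη0, sub_zero, Real.coe_toNNReal _ (hηnn _)]
      using isBigO_sub_dist_of_locallyLipschitz hη xeq
  have hηinf' : ∀ r > (0 : ℝ), ∃ m > 0, ∀ y, r ≤ dist y xeq → m ≤ (η y).toNNReal := by
    intro r hr
    obtain ⟨m, hm, hηm⟩ := hηinf r hr
    exact ⟨m.toNNReal, Real.toNNReal_pos.2 hm, fun y hy =>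
      Real.toNNReal_le_toNNReal (hηm y (by rwa [← dist_eq_norm]))⟩
  rw [zubovV_eq_orbitCost]
  exact zubovV_finite_iff_mem_roa_general hφadd (fun x t ht => (hφd x t ht).continuousWithinAt)
    hstab' (continuous_real_toNNReal.comp hη.continuous) hηO hηinf'
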